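/- arXiv:1408.1843 — 6 statements merged into one kernel-verified Lean document; each statement's English description precedes it below -/
import Mathlib

section
/- Let L be a finite lattice and let (J(L), ≤, M) be its join-presentation, where M(j) is the set of minimal join-covers of j. Then this presentation is transitive: for every j ∈ J(L), every C ∈ M(j), and every family {D_c | c ∈ C} with D_c ∈ M(c) for each c ∈ C, there exists E ∈ M(j) with E ≪ ⋃_{c∈C} D_c. -/
/-- The refinement relation: `A ≪ B` iff every element of `A` is below some element of `B`. -/
def Refines {L : Type*} [Preorder L] (A B : Set L) : Prop :=
  ∀ a ∈ A, ∃ b ∈ B, a ≤ b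

/-- An element `j ≠ ⊥` is join-irreducible if `j = a ∨ b` implies `j = a` or `j = b`. -/
def JoinIrr {L : Type*} [Lattice L] [OrderBot L] (j : L) : Prop :=
  j ≠ ⊥ ∧ ∀ a b : L, j = a ⊔ b → j = a ∨ j = b

/-- `C` is a minimal join-cover of `a`: `C` is a join-cover of `a` (`a ≤ ⋁C`), `C` is an
`≤`-antichain, and every `≤`-antichain `D` with `a ≤ ⋁D` and `D ≪ C` equals `C`. -/
def MinJoinCover {L : Type*} [CompleteLattice L] (a : L) (C : Set L) : Prop :=
  a ≤ sSup C ∧ IsAntichain (· ≤ ·) C ∧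
    ∀ D : Set L, IsAntichain (· ≤ ·) D → a ≤ sSup D → Refines D C → D = C

/-- The join-presentation of a finite lattice is transitive: for every
join-irreducible `j`, every minimal join-cover `C` of `j`, and every family
`{D_c | c ∈ C}` of minimal join-covers `D_c` of `c`, there is a minimal join-cover
`E` of `j` with `E ≪ ⋃_{c ∈ C} D_c`. -/
theorem joinPresentation_transitive {L : Type*} [CompleteLattice L] [Fintype L]
    (j : L) (hj : JoinIrr j) (C : Set L) (hC : MinJoinCover j C)
    (D : L → Set L) (hD : ∀ c ∈ C, MinJoinCover c (D c)) :
    ∃ E : Set L, MinJoinCover j E ∧ Refines E (⋃ c ∈ C, D c) := by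
  classical
  set U : Set L := ⋃ c ∈ C, D c with hU
  have hjU : j ≤ sSup U := by
    refine hC.1.trans (sSup_le fun c hc => (hD c hc).1.trans (sSup_le_sSup ?_))
    intro x hx
    exact Set.mem_biUnion hc hx
  -- lower sets refining `U` whose join is above `j`
  let P : Set (Set L) := {S | IsLowerSet S ∧ j ≤ sSup S ∧ Refines S U}
  have hPne : P.Nonempty := by
    refine ⟨{x | ∃ u ∈ U, x ≤ u}, ?_, ?_, ?_⟩
    · rintro a b hba ⟨u, hu, hau⟩
      exact ⟨u, hu, hba.trans hau⟩
    · exact hjU.trans (sSup_le_sSup fun u hu => ⟨u, hu, le_rfl⟩)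
    · exact fun a ha => ha
  obtain ⟨S, hS⟩ := (Set.toFinite P).exists_minimal hPne
  obtain ⟨hlow, hjS, hSU⟩ := hS.prop
  have hmax : ∀ x ∈ S, ∃ m, x ≤ m ∧ Maximal (· ∈ S) m := fun x hx =>
    (Set.toFinite S).exists_le_maximal hx
  refine ⟨{m | Maximal (· ∈ S) m}, ⟨?_, ?_, ?_⟩, fun a ha => hSU a ha.prop⟩
  · refine hjS.trans (sSup_le fun x hx => ?_)
    obtain ⟨m, hxm, hm⟩ := hmax x hx
    exact hxm.trans (le_sSup hm)
  · intro a ha b hb hab hle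
    exact hab (le_antisymm hle (ha.2 hb.1 hle))
  · intro F hF hjF hFE
    have hsub : {x | ∃ f ∈ F, x ≤ f} ⊆ S := by
      rintro x ⟨f, hf, hxf⟩
      obtain ⟨m, hm, hfm⟩ := hFE f hf
      exact hlow (hxf.trans hfm) hm.prop
    have hFP : {x | ∃ f ∈ F, x ≤ f} ∈ P := by
      refine ⟨?_, ?_, fun a ha => hSU a (hsub ha)⟩
      · rintro a b hba ⟨u, hu, hau⟩
        exact ⟨u, hu, hba.trans hau⟩
      · exact hjF.trans (sSup_le_sSup fun u hu => ⟨u, hu, le_rfl⟩)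
    have hsup : S ⊆ {x | ∃ f ∈ F, x ≤ f} := hS.2 hFP hsub
    have hFS : ∀ f ∈ F, f ∈ S := fun f hf => hsub ⟨f, hf, le_rfl⟩
    ext x
    constructor
    · intro hx
      refine ⟨hFS x hx, fun y hy hxy => ?_⟩
      obtain ⟨f, hf, hyf⟩ := hsup hy
      have : x = f := hF.eq hx hf (hxy.trans hyf)
      exact this ▸ hyf
    · intro hx
      obtain ⟨f, hf, hxf⟩ := hsup hx.prop
      have : x = f := le_antisymm hxf (hx.2 (hFS f hf) hxf)
      exact this ▸ hf
end

section
/- Let L be a finite lattice, let (J(L), ≤, M) be its join-presentation, and let 𝔏_L be the lattice of closed downsets of this presentation, ordered by inclusion. Then the map a ↦ {j ∈ J(L) | j ≤ a} is an order isomorphism from L onto 𝔏_L, with inverse S ↦ ⋁S. -/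
/-- The closure map of the join-presentation of `L`: for a subset `S` of `J(L)`,
`cl(S) := {j ∈ J(L) | ∃ C ∈ M(j), C ⊆ S}` (join-irreducibles are represented as
elements of `L` satisfying `JoinIrr`). -/
def clJ {L : Type*} [CompleteLattice L] (S : Set L) : Set L :=
  {j : L | JoinIrr j ∧ ∃ C : Set L, MinJoinCover j C ∧ C ⊆ S}

theorem exists_minCover_subset {L : Type*} [CompleteLattice L] [Fintype L] (S : Set L)
    (hS : ∀ x y : L, JoinIrr x → y ∈ S → x ≤ y → x ∈ S) (j : L) (hj : j ≤ sSup S) :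
    ∃ C : Set L, MinJoinCover j C ∧ C ⊆ S := by
  classical
  obtain ⟨I, hI⟩ := exists_minimal_of_wellFoundedLT
    (fun I : Set L => IsLowerSet I ∧ (∀ x ∈ I, ∃ s ∈ S, x ≤ s) ∧ j ≤ sSup I)
    ⟨{x | ∃ s ∈ S, x ≤ s}, fun a b hba ⟨s, hs, h⟩ => ⟨s, hs, hba.trans h⟩, fun x hx => hx,
      hj.trans (sSup_le_sSup fun x hx => ⟨x, hx, le_rfl⟩)⟩
  obtain ⟨⟨hlow, hsub, hcov⟩, hmin⟩ := hI
  have hmax : ∀ x ∈ I, ∃ m, x ≤ m ∧ Maximal (· ∈ I) m := fun x hx =>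
    (Set.toFinite I).exists_le_maximal hx
  -- removing a maximal element destroys the cover
  have hrem : ∀ c, Maximal (· ∈ I) c → ¬ c ≤ sSup (I \ {c}) := by
    intro c hc hle
    have h1 : I ⊆ I \ {c} := by
      refine hmin ⟨?_, fun x hx => hsub x hx.1, hcov.trans (sSup_le fun x hx => ?_)⟩
        Set.sdiff_subset
      · rintro a b hba ⟨haI, hac⟩
        refine ⟨hlow hba haI, ?_⟩
        rintro rfl
        exact hac (le_antisymm (hc.2 haI hba) hba)
      · by_cases hxc : x = c
        · exact hxc ▸ hle
        · exact le_sSup ⟨hx, hxc⟩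
    exact (h1 hc.1).2 rfl
  refine ⟨{x | Maximal (· ∈ I) x}, ⟨?_, ?_, ?_⟩, ?_⟩
  · refine hcov.trans (sSup_le fun x hx => ?_)
    obtain ⟨m, hxm, hm⟩ := hmax x hx
    exact hxm.trans (le_sSup hm)
  · intro a ha b hb hab hle
    exact hab (le_antisymm hle (ha.2 hb.1 hle))
  · intro D hD hjD hDC
    have hDI : ∀ x ∈ D, x ∈ I := fun x hx => by
      obtain ⟨c, hc, hxc⟩ := hDC x hx
      exact hlow hxc hc.1
    have hle : ∀ x ∈ I, ∃ d ∈ D, x ≤ d := by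
      have := hmin (y := {x | ∃ d ∈ D, x ≤ d})
        ⟨fun a b hba ⟨s, hs, h⟩ => ⟨s, hs, hba.trans h⟩,
          fun x ⟨d, hd, hxd⟩ => hsub x (hlow hxd (hDI d hd)),
          hjD.trans (sSup_le_sSup fun x hx => ⟨x, hx, le_rfl⟩)⟩
        (fun x ⟨d, hd, hxd⟩ => hlow hxd (hDI d hd))
      exact fun x hx => this hx
    ext x
    constructor
    · intro hx
      refine ⟨hDI x hx, fun y hy hxy => ?_⟩
      obtain ⟨d, hd, hyd⟩ := hle y hy
      have : x = d := hD.eq hx hd (hxy.trans hyd)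
      exact this ▸ hyd
    · intro hx
      obtain ⟨d, hd, hxd⟩ := hle x hx.1
      have : x = d := le_antisymm hxd (hx.2 (hDI d hd) hxd)
      exact this ▸ hd
  · intro c hc
    obtain ⟨s, hs, hcs⟩ := hsub c hc.1
    refine hS c s ⟨?_, ?_⟩ hs hcs
    · intro h0
      exact hrem c hc (h0.le.trans bot_le)
    · intro a b hab
      by_contra! hne
      have ha : a ≤ c := hab ▸ le_sup_left
      have hb : b ≤ c := hab ▸ le_sup_right
      exact hrem c hc (hab.le.trans (sup_le
        (le_sSup ⟨hlow ha hc.1, fun h => hne.1 (Set.mem_singleton_iff.1 h).symm⟩)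
        (le_sSup ⟨hlow hb hc.1, fun h => hne.2 (Set.mem_singleton_iff.1 h).symm⟩)))

theorem sSup_joinIrr_le {L : Type*} [CompleteLattice L] [Fintype L] (a : L) :
    sSup {j : L | JoinIrr j ∧ j ≤ a} = a := by
  refine le_antisymm (sSup_le fun x hx => hx.2) ?_
  induction a using WellFoundedLT.induction with
  | ind a ih =>
    by_cases h : JoinIrr a
    · exact le_sSup ⟨h, le_rfl⟩
    by_cases h0 : a = ⊥
    · exact h0.le.trans bot_le
    have h2 : ∃ b c : L, a = b ⊔ c ∧ a ≠ b ∧ a ≠ c := by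
      by_contra! hn
      exact h ⟨h0, fun b c hbc => or_iff_not_imp_left.2 (hn b c hbc)⟩
    obtain ⟨b, c, habc, hab, hac⟩ := h2
    have hb : b ≤ a := habc ▸ le_sup_left
    have hc : c ≤ a := habc ▸ le_sup_right
    refine habc.le.trans (sup_le ?_ ?_)
    · exact (ih b (lt_of_le_of_ne hb hab.symm)).trans
        (sSup_le_sSup fun x hx => ⟨hx.1, hx.2.trans hb⟩)
    · exact (ih c (lt_of_le_of_ne hc hac.symm)).trans
        (sSup_le_sSup fun x hx => ⟨hx.1, hx.2.trans hc⟩)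

/-- For a finite lattice `L`, the map `a ↦ {j ∈ J(L) | j ≤ a}` is an
order isomorphism from `L` onto the lattice `𝔏_L` of closed downsets of the
join-presentation of `L` (ordered by inclusion), with inverse `S ↦ ⋁S`. -/
theorem orderIso_closedDownsets {L : Type*} [CompleteLattice L] [Fintype L] :
    ∃ e : L ≃o {S : Set L // (∀ x ∈ S, JoinIrr x) ∧
        (∀ x y : L, JoinIrr x → y ∈ S → x ≤ y → x ∈ S) ∧ clJ S = S},
      (∀ a : L, (e a : Set L) = {j : L | JoinIrr j ∧ j ≤ a}) ∧
      (∀ S, e.symm S = sSup (S : Set L)) := by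
  have key : ∀ a : L, clJ {j : L | JoinIrr j ∧ j ≤ a} = {j : L | JoinIrr j ∧ j ≤ a} := by
    intro a
    ext j
    constructor
    · rintro ⟨hj, C, hC, hCS⟩
      exact ⟨hj, hC.1.trans (sSup_le fun x hx => (hCS hx).2)⟩
    · rintro ⟨hj, hja⟩
      exact ⟨hj, exists_minCover_subset {j : L | JoinIrr j ∧ j ≤ a}
        (fun x y hx hy hxy => ⟨hx, hxy.trans hy.2⟩) j (le_sSup ⟨hj, hja⟩)⟩
  refine ⟨{ toFun := fun a => ⟨{j : L | JoinIrr j ∧ j ≤ a}, fun x hx => hx.1,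
              fun x y hx hy hxy => ⟨hx, hxy.trans hy.2⟩, key a⟩
            invFun := fun S => sSup (S : Set L)
            left_inv := fun a => sSup_joinIrr_le a
            right_inv := ?_
            map_rel_iff' := ?_ }, fun a => rfl, fun S => rfl⟩
  · rintro ⟨S, hirr, hdown, hcl⟩
    apply Subtype.ext
    ext j
    constructor
    · rintro ⟨hj, hle⟩
      have : j ∈ clJ S := ⟨hj, exists_minCover_subset S hdown j hle⟩
      rw [hcl] at this
      exact this
    · intro hj
      exact ⟨hirr j hj, le_sSup hj⟩
  · intro a b
    constructor
    · intro h
      rw [← sSup_joinIrr_le a, ← sSup_joinIrr_le b]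
      exact sSup_le_sSup h
    · intro h x hx
      exact ⟨hx.1, hx.2.trans h⟩
end

section
/- Let L be a finite lattice with join-presentation (J(L), ≤, M). Let j, k ∈ J(L) and let C ∈ M(j) be a minimal join-cover of j with k ∈ C. Then k ∉ cl(↓(C \ {k})), where ↓(C \ {k}) denotes the downward closure of C \ {k} in J(L). -/
/-- If `C` is a minimal join-cover of `j` and `k ∈ C`, then
`k ∉ cl(↓(C \ {k}))`, where `↓(C \ {k})` is the downward closure of `C \ {k}`
within the poset `J(L)` of join-irreducibles. -/
theorem not_mem_clJ_downset_diff {L : Type*} [CompleteLattice L] [Fintype L]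
    (j k : L) (hj : JoinIrr j) (hk : JoinIrr k)
    (C : Set L) (hC : MinJoinCover j C) (hkC : k ∈ C) :
    k ∉ clJ {x : L | JoinIrr x ∧ ∃ c ∈ C \ {k}, x ≤ c} := by
  rintro ⟨_, D, ⟨hkD, _, _⟩, hDS⟩
  have h1 : k ≤ sSup (C \ {k}) := by
    refine hkD.trans (sSup_le fun d hd => ?_)
    obtain ⟨_, c, hc, hdc⟩ := hDS hd
    exact hdc.trans (le_sSup hc)
  have h2 : sSup C ≤ sSup (C \ {k}) := by
    refine sSup_le fun c hc => ?_
    by_cases h : c = k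
    · rw [h]; exact h1
    · exact le_sSup ⟨hc, h⟩
  have h3 : C \ {k} = C := hC.2.2 _ (hC.2.1.subset Set.diff_subset) (hC.1.trans h2)
    (fun a ha => ⟨a, ha.1, le_rfl⟩)
  have h4 : k ∈ C \ {k} := by rw [h3]; exact hkC
  exact h4.2 rfl
end

section
/- Let L be a finite lattice with join-presentation (J(L), ≤, M). Let j, k ∈ J(L) and let C ∈ M(j) be a minimal join-cover of j with k ∈ C. Then there is no minimal join-cover D ∈ M(j) such that D ⊆ cl(↓(C \ {k})) ∪ {k' ∈ J(L) | k' < k}, where ↓(C \ {k}) denotes the downward closure of C \ {k} in J(L). -/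
/-- If `C` is a minimal join-cover of `j` and `k ∈ C`, then there is
no minimal join-cover `D` of `j` with `D ⊆ cl(↓(C \ {k})) ∪ {k' ∈ J(L) | k' < k}`,
where `↓(C \ {k})` is the downward closure of `C \ {k}` within `J(L)`. -/
theorem no_minJoinCover_in_clJ_union {L : Type*} [CompleteLattice L] [Fintype L]
    (j k : L) (hj : JoinIrr j) (hk : JoinIrr k)
    (C : Set L) (hC : MinJoinCover j C) (hkC : k ∈ C) :
    ¬ ∃ D : Set L, MinJoinCover j D ∧
        D ⊆ clJ {x : L | JoinIrr x ∧ ∃ c ∈ C \ {k}, x ≤ c} ∪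
            {k' : L | JoinIrr k' ∧ k' < k} := by
  classical
  rintro ⟨D, hD, hDs⟩
  obtain ⟨b, hb⟩ : ∃ b : L, b = sSup {x : L | x < k} := ⟨_, rfl⟩
  have hbk : b ≤ k := by
    rw [hb]
    exact sSup_le fun x hx => le_of_lt hx
  have hbne : b ≠ k := by
    intro h
    have hs : SupIrred k := by
      refine ⟨fun hm => hk.1 hm.eq_bot, fun x y hxy => ?_⟩
      rcases hk.2 x y hxy.symm with h | h
      · exact Or.inl h.symm
      · exact Or.inr h.symm
    have h2 : (Finset.univ.filter (fun x : L => x < k)).sup id = k := by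
      rw [Finset.sup_id_eq_sSup, ← h, hb]
      congr 1
      ext x
      simp [← hb, h]
    obtain ⟨i, hi, hik⟩ := hs.finset_sup_eq h2
    simp only [Finset.mem_filter, id] at hi hik
    exact hi.2.ne hik
  obtain ⟨S, hS⟩ : ∃ S : Set L, S = insert b (C \ {k}) := ⟨_, rfl⟩
  obtain ⟨E, hE⟩ : ∃ E : Set L, E = {x | Maximal (fun y => y ∈ S) x} := ⟨_, rfl⟩
  have hSE : sSup S ≤ sSup E := by
    refine sSup_le fun x hx => ?_
    obtain ⟨m, hxm, hm⟩ := (Set.toFinite S).exists_le_maximal hx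
    exact hxm.trans (le_sSup (by rw [hE]; exact hm))
  have hDS : sSup D ≤ sSup S := by
    refine sSup_le fun d hd => ?_
    rcases hDs hd with ⟨_, F, hF, hFs⟩ | ⟨_, hdk⟩
    · refine hF.1.trans (sSup_le fun f hf => ?_)
      obtain ⟨_, c, hc, hfc⟩ := hFs hf
      exact hfc.trans (le_sSup (by rw [hS]; exact Or.inr hc))
    · have h1 : d ≤ b := by rw [hb]; exact le_sSup hdk
      exact h1.trans (le_sSup (by rw [hS]; exact Or.inl rfl))
  have hEC : E = C := by
    refine hC.2.2 E ?_ (hD.1.trans (hDS.trans hSE)) ?_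
    · intro x hx y hy hne hxy
      rw [hE] at hx hy
      exact hne (le_antisymm hxy (hx.2 hy.1 hxy))
    · intro x hx
      rw [hE] at hx
      have hxS := hx.1
      rw [hS] at hxS
      rcases hxS with h | h
      · exact ⟨k, hkC, h ▸ hbk⟩
      · exact ⟨x, h.1, le_rfl⟩
  have hkE : k ∈ E := hEC ▸ hkC
  rw [hE] at hkE
  have hkS := hkE.1
  rw [hS] at hkS
  rcases hkS with h | h
  · exact hbne h.symm
  · exact h.2 rfl
end

section
/- Let L be a finite lattice with more than one element, with join-presentation (J(L), ≤, M), and let F_L = (J(L), σ_M) be its associated monotone neighbourhood frame, where σ_M(j) := {S ⊆ J(L) | ∃ C ∈ M(j), C ⊆ S}. Then for every lattice term t over AtProp, every join-irreducible j ∈ J(L), and every assignment v : AtProp ∪ Nom → L with v(𝐣) = j (where nominals are sent to join-irreducibles): L, v ⊨ 𝐣 ≤ t if and only if F_L, v*, j ⊩ ST(t), where v*(x) := {k ∈ J(L) | k ≤ v(x)} and ST is the standard translation defined by ST(p) = p, ST(⊤) = ⊤, ST(⊥) = ⊥, ST(t ∧ s) = ST(t) ∧ ST(s), ST(t ∨ s)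 = (∃∀)(ST(t) ∨ ST(s)). -/
/-- Formulas of monotone modal logic over atomic propositions `P`:
`φ ::= ⊥ | ⊤ | p | ¬φ | φ ∨ φ | φ ∧ φ | (∃∀)φ | (∀∃)φ`. -/
inductive MForm (P : Type*) where
  | bot : MForm P
  | top : MForm P
  | atom (p : P) : MForm P
  | neg (φ : MForm P) : MForm P
  | or (φ ψ : MForm P) : MForm P
  | and (φ ψ : MForm P) : MForm P
  | exAll (φ : MForm P) : MForm P
  | allEx (φ : MForm P) : MForm P

/-- Satisfaction of a monotone modal formula at a state `w` of a neighbourhood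
model `((X, σ), v)`. -/
def MSat {X P : Type*} (σ : X → Set (Set X)) (v : P → Set X) :
    MForm P → X → Prop
  | .bot, _ => False
  | .top, _ => True
  | .atom p, w => w ∈ v p
  | .neg φ, w => ¬ MSat σ v φ w
  | .or φ ψ, w => MSat σ v φ w ∨ MSat σ v ψ w
  | .and φ ψ, w => MSat σ v φ w ∧ MSat σ v ψ w
  | .exAll φ, w => ∃ C ∈ σ w, ∀ c ∈ C, MSat σ v φ c
  | .allEx φ, w => ∀ C ∈ σ w, ∃ c ∈ C, MSat σ v φ c

/-- Lattice terms over atomic propositions `P`: `t ::= ⊥ | ⊤ | p | t ∨ t | t ∧ t`. -/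
inductive LTerm (P : Type*) where
  | bot : LTerm P
  | top : LTerm P
  | atom (p : P) : LTerm P
  | or (t s : LTerm P) : LTerm P
  | and (t s : LTerm P) : LTerm P

/-- Interpretation of a lattice term in a lattice `L` under an assignment `v`. -/
def LTerm.interp {L P : Type*} [Lattice L] [BoundedOrder L] (v : P → L) :
    LTerm P → L
  | .bot => ⊥
  | .top => ⊤
  | .atom p => v p
  | .or t s => t.interp v ⊔ s.interp v
  | .and t s => t.interp v ⊓ s.interp v

/-- The standard translation from lattice terms to monotone modal formulas:
`STr(p) = p`, `STr(⊤) = ⊤`, `STr(⊥) = ⊥`, `STr(t ∧ s) = STr(t) ∧ STr(s)`,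
`STr(t ∨ s) = (∃∀)(STr(t) ∨ STr(s))`. -/
def STr {P : Type*} : LTerm P → MForm P
  | .bot => .bot
  | .top => .top
  | .atom p => .atom p
  | .or t s => .exAll (.or (STr t) (STr s))
  | .and t s => .and (STr t) (STr s)

/-- The neighbourhood function of the monotone neighbourhood frame `F_L` associated
with a finite lattice `L`: the states are the join-irreducibles of `L` and
`σ_M(j) := {S ⊆ J(L) | ∃ C ∈ M(j), C ⊆ S}`. -/
def sigmaM {L : Type*} [CompleteLattice L] (j : {x : L // JoinIrr x}) :
    Set (Set {x : L // JoinIrr x}) :=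
  {S | ∃ C : Set L, MinJoinCover (j : L) C ∧ C ⊆ Subtype.val '' S}

theorem exists_min_cover_aux {L : Type*} [CompleteLattice L] [Fintype L] (a : L) (A : Set L)
    (hA : a ≤ sSup A) :
    ∃ C : Set L, MinJoinCover a C ∧ Refines C A ∧ ∀ c ∈ C, JoinIrr c := by
  classical
  let F : Set (Set L) := {U | IsLowerSet U ∧ a ≤ sSup U ∧ Refines U A}
  have hF : F.Nonempty := by
    refine ⟨{x | ∃ b ∈ A, x ≤ b}, ?_, ?_, ?_⟩
    · rintro x y hyx ⟨b, hb, hxb⟩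
      exact ⟨b, hb, hyx.trans hxb⟩
    · exact hA.trans (sSup_le_sSup fun b hb => ⟨b, hb, le_rfl⟩)
    · exact fun x hx => hx
  obtain ⟨U, ⟨hUl, hUa, hUA⟩, hmin⟩ := (wellFounded_lt (α := Set L)).has_min F hF
  have hmin' : ∀ V : Set L, IsLowerSet V → a ≤ sSup V → V ⊆ U → V = U := by
    intro V hV hVa hVU
    by_contra hne
    exact hmin V ⟨hV, hVa, fun x hx => hUA x (hVU hx)⟩ (lt_of_le_of_ne hVU hne)
  have hmax : ∀ x ∈ U, ∃ c, Maximal (· ∈ U) c ∧ x ≤ c := by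
    intro x hx
    obtain ⟨c, hc, hcm⟩ := (Set.toFinite U).exists_le_maximal hx
    exact ⟨c, hcm, hc⟩
  have hkey : ∀ c, Maximal (· ∈ U) c → ¬ c ≤ sSup (U \ {c}) := by
    intro c hc hle
    have h := hmin' (U \ {c}) ?_ ?_ Set.sdiff_subset
    · have : c ∈ U \ {c} := by rw [h]; exact hc.1
      exact this.2 rfl
    · rintro x y hyx ⟨hx, hxc⟩
      refine ⟨hUl hyx hx, ?_⟩
      intro hyc
      have hyc : y = c := hyc
      subst hyc
      exact hxc (le_antisymm (hc.2 hx hyx) hyx)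
    · refine hUa.trans (sSup_le fun x hx => ?_)
      by_cases hxc : x = c
      · rw [hxc]; exact hle
      · exact le_sSup ⟨hx, hxc⟩
  refine ⟨{c | Maximal (· ∈ U) c}, ⟨?_, ?_, ?_⟩, ?_, ?_⟩
  · refine hUa.trans (sSup_le fun x hx => ?_)
    obtain ⟨c, hc, hxc⟩ := hmax x hx
    exact hxc.trans (le_sSup hc)
  · intro x hx y hy hne hxy
    exact hne (le_antisymm hxy (hx.2 hy.1 hxy))
  · intro D hD hDa hDC
    have hDU : {x | ∃ d ∈ D, x ≤ d} = U := by
      apply hmin'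
      · rintro x y hyx ⟨b, hb, hxb⟩
        exact ⟨b, hb, hyx.trans hxb⟩
      · exact hDa.trans (sSup_le_sSup fun b hb => ⟨b, hb, le_rfl⟩)
      · rintro x ⟨d, hd, hxd⟩
        obtain ⟨c, hc, hdc⟩ := hDC d hd
        exact hUl (hxd.trans hdc) hc.1
    have hsub : ∀ d ∈ D, d ∈ U := fun d hd => by rw [← hDU]; exact ⟨d, hd, le_rfl⟩
    have hup : ∀ u ∈ U, ∃ d ∈ D, u ≤ d := fun u hu => by rw [← hDU] at hu; exact hu
    ext x
    constructor
    · intro hx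
      refine ⟨hsub x hx, fun y hy hxy => ?_⟩
      obtain ⟨d, hd, hyd⟩ := hup y hy
      have : x = d := hD.eq hx hd (hxy.trans hyd)
      rw [this]; exact hyd
    · intro hx
      obtain ⟨d, hd, hxd⟩ := hup x hx.1
      have : x = d := le_antisymm hxd (hx.2 (hsub d hd) hxd)
      rw [this]; exact hd
  · exact fun c hc => hUA c hc.1
  · intro c hc
    refine ⟨fun h => hkey c hc (by rw [h]; exact bot_le), fun x y hxy => ?_⟩
    by_contra! hne
    have hx : x ≤ c := by rw [hxy]; exact le_sup_left
    have hy : y ≤ c := by rw [hxy]; exact le_sup_right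
    apply hkey c hc
    calc c = x ⊔ y := hxy
      _ ≤ sSup (U \ {c}) := sup_le (le_sSup ⟨hUl hx hc.1, fun h => hne.1 h.symm⟩)
        (le_sSup ⟨hUl hy hc.1, fun h => hne.2 h.symm⟩)

theorem st_aux {L P : Type*} [CompleteLattice L] [Fintype L] (v : P → L) (t : LTerm P) :
    ∀ j : {x : L // JoinIrr x}, (j : L) ≤ t.interp v ↔
      MSat sigmaM (fun p => {k : {x : L // JoinIrr x} | (k : L) ≤ v p}) (STr t) j := by
  induction t with
  | bot => intro j; simpa [LTerm.interp, STr, MSat] using j.2.1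
  | top => intro j; simp [LTerm.interp, STr, MSat]
  | atom p => intro j; simp [LTerm.interp, STr, MSat]
  | and t s iht ihs =>
    intro j
    simp only [LTerm.interp, STr, MSat, le_inf_iff, iht, ihs]
  | or t s iht ihs =>
    intro j
    simp only [LTerm.interp, STr, MSat, ← iht, ← ihs]
    constructor
    · intro h
      obtain ⟨C, hC, hCA, hCJ⟩ := exists_min_cover_aux (j : L) {t.interp v, s.interp v}
        (by rw [sSup_pair]; exact h)
      refine ⟨Subtype.val ⁻¹' C, ⟨C, hC, fun c hc => ⟨⟨c, hCJ c hc⟩, hc, rfl⟩⟩, ?_⟩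
      intro c hc
      obtain ⟨b, hb, hcb⟩ := hCA c hc
      rcases hb with rfl | rfl
      · exact Or.inl hcb
      · exact Or.inr hcb
    · rintro ⟨S, ⟨C, hC, hCS⟩, hS⟩
      refine hC.1.trans (sSup_le fun c hc => ?_)
      obtain ⟨k, hk, rfl⟩ := hCS hc
      rcases hS k hk with h | h
      · exact h.trans le_sup_left
      · exact h.trans le_sup_right

/-- For a finite lattice `L` with more than one element, any lattice
term `t` over `AtProp`, any join-irreducible `j`, and any assignment
`v : AtProp ∪ Nom → L` sending nominals to join-irreducibles with `v(jnom) = j`: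
`L, v ⊨ jnom ≤ t` iff `F_L, v*, j ⊩ ST(t)`, where `v*(x) = {k ∈ J(L) | k ≤ v(x)}`. -/
theorem standard_translation_local {L P N : Type*} [CompleteLattice L] [Fintype L]
    [Nontrivial L]
    (v : P ⊕ N → L) (hnom : ∀ n : N, JoinIrr (v (Sum.inr n)))
    (t : LTerm P) (jnom : N) (j : L) (hj : JoinIrr j) (hvj : v (Sum.inr jnom) = j) :
    j ≤ t.interp (fun p => v (Sum.inl p)) ↔
      MSat sigmaM
        (fun p => {k : {x : L // JoinIrr x} | (k : L) ≤ v (Sum.inl p)})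
        (STr t) ⟨j, hj⟩ := by
  exact st_aux (fun p => v (Sum.inl p)) t ⟨j, hj⟩
end

section
/- Let L be a finite lattice, with join-presentation (J(L), ≤, M), and let F_L = (J(L), σ_M) be its associated monotone neighbourhood frame, where σ_M(j) := {S ⊆ J(L) | ∃ C ∈ M(j), C ⊆ S}. Then for all lattice terms t and s over AtProp: L ⊨ t ≤ s (i.e., v(t) ≤ v(s) for every assignment v : AtProp → L) if and only if F_L ⊩ ST(t) ≤ ST(s), meaning that for every closed valuation u : AtProp → 𝔏_L and every j ∈ J(L), if (F_L, u), j ⊩ ST(t) then (F_L, u), j ⊩ ST(s). Here ST is defined by ST(p) = p, ST(⊤) = ⊤, ST(⊥) = ⊥, ST(t ∧ s) = ST(t) ∧ ST(s), ST(t ∨ s) = (∃∀)(ST(t) ∨ ST(s)). -/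
/-- The closure map of the join-presentation of `L`, acting on subsets of the
type `J(L)` of join-irreducibles: `cl(S) := {j ∈ J(L) | ∃ C ∈ M(j), C ⊆ S}`. -/
def clJsub {L : Type*} [CompleteLattice L] (S : Set {x : L // JoinIrr x}) :
    Set {x : L // JoinIrr x} :=
  {j | ∃ C : Set L, MinJoinCover (j : L) C ∧ C ⊆ Subtype.val '' S}

theorem exists_minCover_aux {L : Type*} [CompleteLattice L] [Fintype L] (a : L) (S : Set L)
    (h : a ≤ sSup S) : ∃ C : Set L, MinJoinCover a C ∧ Refines C S ∧ ∀ c ∈ C, JoinIrr c := by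
  obtain ⟨T, hT⟩ := (Set.toFinite {T : Set L | IsLowerSet T ∧ a ≤ sSup T ∧ Refines T S}).exists_minimal
    ⟨{x | ∃ y ∈ S, x ≤ y}, by
      refine ⟨fun x y hxy ⟨z, hz, hxz⟩ => ⟨z, hz, hxy.trans hxz⟩,
        h.trans (sSup_le_sSup fun x hx => ⟨x, hx, le_rfl⟩), fun x hx => hx⟩⟩
  obtain ⟨⟨hlow, hsup, href⟩, hmin⟩ := hT
  have above : ∀ x ∈ T, ∃ c, Maximal (· ∈ T) c ∧ x ≤ c := by
    intro x hx
    obtain ⟨c, hxc, hc⟩ := (Set.toFinite T).exists_le_maximal hx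
    exact ⟨c, hc, hxc⟩
  refine ⟨{c | Maximal (· ∈ T) c}, ⟨?_, ?_, ?_⟩, fun c hc => href c hc.1, ?_⟩
  · refine hsup.trans (sSup_le fun x hx => ?_)
    obtain ⟨c, hc, hxc⟩ := above x hx
    exact hxc.trans (le_sSup hc)
  · intro x hx y hy hne hxy
    exact hne (hxy.antisymm (hx.2 hy.1 hxy))
  · intro D hD haD hDC
    have hsub : {x | ∃ y ∈ D, x ≤ y} ⊆ T := by
      rintro x ⟨y, hy, hxy⟩
      obtain ⟨c, hc, hyc⟩ := hDC y hy
      exact hlow (hxy.trans hyc) hc.1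
    have hsub2 : T ⊆ {x | ∃ y ∈ D, x ≤ y} :=
      hmin ⟨fun x y hxy ⟨z, hz, hxz⟩ => ⟨z, hz, hxy.trans hxz⟩,
        haD.trans (sSup_le_sSup fun x hx => ⟨x, hx, le_rfl⟩), fun x hx => href x (hsub hx)⟩ hsub
    have hDT : D ⊆ T := fun x hx => hsub ⟨x, hx, le_rfl⟩
    ext d
    constructor
    · intro hd
      refine ⟨hDT hd, fun y hy hdy => ?_⟩
      obtain ⟨z, hz, hyz⟩ := hsub2 hy
      have : d = z := hD.eq hd hz (hdy.trans hyz)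
      exact this ▸ hyz
    · intro hd
      obtain ⟨z, hz, hdz⟩ := hsub2 hd.1
      have : d = z := hdz.antisymm (hd.2 (hDT hz) hdz)
      exact this ▸ hz
  · intro c hc
    have key : ¬ c ≤ sSup (T \ {c}) := by
      intro hle
      have := hmin (y := T \ {c}) ⟨?_, ?_, fun x hx => href x hx.1⟩ Set.sdiff_subset
      · exact (this hc.1).2 rfl
      · intro x y hxy hx
        refine ⟨hlow hxy hx.1, fun hy => hx.2 ?_⟩
        have hy' : y = c := hy
        subst hy'
        exact (hc.2 hx.1 hxy).antisymm hxy
      · refine hsup.trans (sSup_le fun x hx => ?_)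
        by_cases hxc : x = c
        · exact hxc ▸ hle
        · exact le_sSup ⟨hx, hxc⟩
    refine ⟨fun h0 => key (h0 ▸ bot_le), fun x y hxy => ?_⟩
    by_contra hcon
    push Not at hcon
    apply key
    have hx : x ≤ c := hxy ▸ le_sup_left
    have hy : y ≤ c := hxy ▸ le_sup_right
    calc c = x ⊔ y := hxy
      _ ≤ sSup (T \ {c}) := sup_le (le_sSup ⟨hlow hx hc.1, fun h => hcon.1 (Eq.symm h)⟩)
        (le_sSup ⟨hlow hy hc.1, fun h => hcon.2 (Eq.symm h)⟩)

theorem msat_iff_aux {L P : Type*} [CompleteLattice L] [Fintype L]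
    (u : P → Set {x : L // JoinIrr x}) (v : P → L) (huv : ∀ p j, j ∈ u p ↔ (j : L) ≤ v p)
    (t : LTerm P) : ∀ j, MSat sigmaM u (STr t) j ↔ (j : L) ≤ t.interp v := by
  induction t with
  | bot =>
    intro j
    simpa [STr, MSat, LTerm.interp] using j.2.1
  | top => intro j; simp [STr, MSat, LTerm.interp]
  | atom p => intro j; exact huv p j
  | and t s iht ihs => intro j; simp [STr, MSat, LTerm.interp, iht, ihs]
  | or t s iht ihs =>
    intro j
    simp only [STr, MSat, LTerm.interp, iht, ihs]
    constructor
    · rintro ⟨S, ⟨C, hC, hCS⟩, hS⟩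
      refine hC.1.trans (sSup_le fun x hx => ?_)
      obtain ⟨c, hc, rfl⟩ := hCS hx
      exact (hS c hc).elim le_sup_of_le_left le_sup_of_le_right
    · intro h
      obtain ⟨C, hC, hr, hJ⟩ := exists_minCover_aux (j : L) {t.interp v, s.interp v}
        (by rwa [sSup_pair])
      refine ⟨{c | (c : L) ∈ C}, ⟨C, hC, fun c hc => ⟨⟨c, hJ c hc⟩, hc, rfl⟩⟩, fun c hc => ?_⟩
      obtain ⟨b, rfl | rfl, hb⟩ := hr c hc
      · exact Or.inl hb
      · exact Or.inr hb

/-- For a finite lattice `L` and lattice terms `t, s` over `AtProp`: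
`L ⊨ t ≤ s` (i.e. `v(t) ≤ v(s)` for every assignment `v`) iff
`F_L ⊩ ST(t) ≤ ST(s)`, i.e. for every closed valuation `u` (mapping each atomic
proposition to a closed downset of the join-presentation) and every
join-irreducible `j`, if `(F_L, u), j ⊩ ST(t)` then `(F_L, u), j ⊩ ST(s)`. -/
theorem standard_translation_global {L P : Type*} [CompleteLattice L] [Fintype L]
    (t s : LTerm P) :
    (∀ v : P → L, t.interp v ≤ s.interp v) ↔
      (∀ u : P → Set {x : L // JoinIrr x},
        (∀ p : P, IsLowerSet (u p) ∧ clJsub (u p) = u p) →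
        ∀ j : {x : L // JoinIrr x},
          MSat sigmaM u (STr t) j → MSat sigmaM u (STr s) j) := by
  constructor
  · intro h u hu j hj
    have huv : ∀ p j, j ∈ u p ↔ (j : L) ≤ sSup (Subtype.val '' u p) := by
      intro p j
      refine ⟨fun h => le_sSup ⟨j, h, rfl⟩, fun h => ?_⟩
      obtain ⟨C, hC, hr, hJ⟩ := exists_minCover_aux (j : L) _ h
      rw [← (hu p).2]
      refine ⟨C, hC, fun c hc => ⟨⟨c, hJ c hc⟩, ?_, rfl⟩⟩
      obtain ⟨_, ⟨b, hb, rfl⟩, hcb⟩ := hr c hc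
      exact (hu p).1 (show (⟨c, hJ c hc⟩ : {x : L // JoinIrr x}) ≤ b from hcb) hb
    have key := msat_iff_aux u _ huv
    rw [key] at hj ⊢
    exact hj.trans (h _)
  · intro h v
    have key := msat_iff_aux (fun p => {j | (j : L) ≤ v p}) v (fun p j => Iff.rfl)
    have h' := h (fun p => {j | (j : L) ≤ v p}) (fun p => ⟨?_, ?_⟩)
    · obtain ⟨C, hC, hr, hJ⟩ := exists_minCover_aux (t.interp v) {t.interp v} (by simp)
      refine hC.1.trans (sSup_le fun c hc => ?_)
      obtain ⟨_, rfl, hcb⟩ := hr c hc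
      exact (key s ⟨c, hJ c hc⟩).1 (h' _ ((key t ⟨c, hJ c hc⟩).2 hcb))
    · intro x y hxy hx
      exact le_trans (show (y : L) ≤ x from hxy) hx
    · ext j
      constructor
      · rintro ⟨C, hC, hCS⟩
        refine hC.1.trans (sSup_le fun x hx => ?_)
        obtain ⟨c, hc, rfl⟩ := hCS hx
        exact hc
      · intro hj
        obtain ⟨C, hC, hr, hJ⟩ := exists_minCover_aux (j : L) {v p} (by simpa using hj)
        refine ⟨C, hC, fun c hc => ⟨⟨c, hJ c hc⟩, ?_, rfl⟩⟩
        obtain ⟨_, rfl, hcb⟩ := hr c hc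
        exact hcb
end
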